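/- Let n ≥ 2 and 1 ≤ r ≤ n-1. If A ⊆ [n]^(r) with |A| = α·C(n,r), then the vertex-boundary of A in Γ_n^(r) satisfies |b(A)| ≥ (1/5)·√(n/(r(n-r)))·α(1-α)·C(n,r). -/

import Mathlib

/-!
Write `μ` for the density of a family in its slice. By induction on the ground set one proves
`μ(A)(1 - μ(A)) ≤ √(2r(n-r)/n) μ(b(A))`. Splitting along an element `e` writes `μ(A)` as the
average, with weights `p = r/n` and `q = (n-r)/n`, of the density `x` of the link of `e` and the
density `y` of the deletion of `e`, so that the variances combine as
`μ(A)(1 - μ(A)) = p x(1-x) + q y(1-y) + p q (y-x)²`.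
By the local LYM inequality, applied to shadows and, through complements, to upper shadows, the part
of `b(A)` on the side of smaller density has density at least `|y-x|`. This pays for the cross term
if the squared constants `2r(n-r)/n` of the two smaller slices are increased by `q` and `p`
respectively. Averaging over all `e` and using concavity of the square root, the increased constants
average to at most the constant of the larger slice.
-/

open Finset Function
open scoped FinsetFamily

/-! ### Real inequalities -/

lemma add_mul_sq_le_sqrt_add_mul {x d q G β : ℝ} (hx : 0 ≤ x) (hd : 0 ≤ d) (hq : 0 ≤ q)
    (hG : 0 ≤ G) (hdβ : d ≤ β) (hxβ : x ≤ √G * β) (hxd : 2 * x + q * d ^ 2 ≤ 1) :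
    x + q * d ^ 2 ≤ √(G + q) * β := by
  have hβ : 0 ≤ β := hd.trans hdβ
  rw [← sq_le_sq₀ (by positivity) (by positivity)]
  calc (x + q * d ^ 2) ^ 2 = x ^ 2 + q * d ^ 2 * (2 * x + q * d ^ 2) := by ring
    _ ≤ (√G * β) ^ 2 + q * β ^ 2 * 1 := by gcongr
    _ = (√(G + q) * β) ^ 2 := by
      rw [mul_pow, mul_pow, Real.sq_sqrt hG, Real.sq_sqrt (by positivity)]; ring

lemma convex_comb_mul_one_sub_le {a b p q G₁ G₀ β₁ β₀ : ℝ}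
    (ha : a ∈ Set.Icc 0 1) (hb : b ∈ Set.Icc 0 1) (hp : 0 ≤ p) (hq : 0 ≤ q) (hpq : p + q = 1)
    (hG₁ : 0 ≤ G₁) (hG₀ : 0 ≤ G₀) (hβ₁ : 0 ≤ β₁) (hβ₀ : 0 ≤ β₀)
    (h₁ : a * (1 - a) ≤ √G₁ * β₁) (h₀ : b * (1 - b) ≤ √G₀ * β₀)
    (hba : b ≤ a + β₁) (hab : a ≤ b + β₀) :
    (p * a + q * b) * (1 - (p * a + q * b)) ≤
      p * (√(G₁ + q) * β₁) + q * (√(G₀ + p) * β₀) := by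
  wlog hle : a ≤ b generalizing a b p q G₁ G₀ β₁ β₀
  · have := this hb ha hq hp (by linarith) hG₀ hG₁ hβ₀ hβ₁ h₀ h₁ hab hba (by linarith)
    linarith
  have hsplit : (p * a + q * b) * (1 - (p * a + q * b)) =
      p * (a * (1 - a) + q * (b - a) ^ 2) + q * (b * (1 - b)) := by
    obtain rfl : q = 1 - p := by linarith
    ring
  obtain ⟨ha0, ha1⟩ := ha
  have hsmall : 2 * (a * (1 - a)) + q * (b - a) ^ 2 ≤ 1 := by
    have hsq : (b - a) ^ 2 ≤ (1 - a) ^ 2 := by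
      have := hb.2
      gcongr
    have hqsq : q * (b - a) ^ 2 ≤ (b - a) ^ 2 := mul_le_of_le_one_left (sq_nonneg _) (by linarith)
    nlinarith
  have hgain : a * (1 - a) + q * (b - a) ^ 2 ≤ √(G₁ + q) * β₁ :=
    add_mul_sq_le_sqrt_add_mul (mul_nonneg ha0 (by linarith)) (by linarith) hq hG₁ (by linarith)
      h₁ hsmall
  have hkeep : b * (1 - b) ≤ √(G₀ + p) * β₀ := h₀.trans (by gcongr; linarith)
  rw [hsplit]
  gcongr

/-- The square of the constant in the isoperimetric inequality for the `r`-subsets of an `n`-set.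
It equals `0` for `n = 0`, since division by zero gives `0`. -/
noncomputable def isoWeight (n r : ℝ) : ℝ := 2 * r * (n - r) / n

lemma isoWeight_nonneg {n r : ℝ} (hr : 0 ≤ r) (hrn : r ≤ n) : 0 ≤ isoWeight n r := by
  have : 0 ≤ n - r := sub_nonneg.2 hrn
  have : 0 ≤ n := hr.trans hrn
  unfold isoWeight
  positivity

lemma isoWeight_average_le {m s : ℝ} (hs : 0 ≤ s) (hsm : s + 1 ≤ m) :
    (s + 1) / (m + 1) * (isoWeight m s + (m - s) / (m + 1)) +
      (m - s) / (m + 1) * (isoWeight m (s + 1) + (s + 1) / (m + 1)) ≤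
    isoWeight (m + 1) (s + 1) := by
  have hm : 0 < m := by linarith
  have hms : 0 ≤ m - s := by linarith
  have hdiff : isoWeight (m + 1) (s + 1) -
      ((s + 1) / (m + 1) * (isoWeight m s + (m - s) / (m + 1)) +
        (m - s) / (m + 1) * (isoWeight m (s + 1) + (s + 1) / (m + 1))) =
      2 * (s + 1) * (m - s) / (m * (m + 1) ^ 2) := by
    unfold isoWeight
    field_simp
    ring
  rw [← sub_nonneg, hdiff]
  positivity

lemma sqrt_isoWeight_average_le {m s : ℝ} (hs : 0 ≤ s) (hsm : s + 1 ≤ m) :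
    (s + 1) / (m + 1) * √(isoWeight m s + (m - s) / (m + 1)) +
      (m - s) / (m + 1) * √(isoWeight m (s + 1) + (s + 1) / (m + 1)) ≤
    √(isoWeight (m + 1) (s + 1)) := by
  have hms : 0 ≤ m - s := by linarith
  have hm : 0 < m + 1 := by linarith
  have hW₁ : 0 ≤ isoWeight m s := isoWeight_nonneg hs (by linarith)
  have hW₀ : 0 ≤ isoWeight m (s + 1) := isoWeight_nonneg (by linarith) hsm
  refine (Real.strictConcaveOn_sqrt.concaveOn.2 ?_ ?_ ?_ ?_ ?_).trans
    (Real.sqrt_le_sqrt (isoWeight_average_le hs hsm))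
  · exact Set.mem_Ici.2 (by positivity)
  · exact Set.mem_Ici.2 (by positivity)
  · positivity
  · positivity
  · field_simp; ring

/-! ### Densities of families of `r`-sets -/

section SliceDensity

variable {ι : Type*}

/-- The density of the family `A` among the `r`-subsets of `S`. It is normalized by the size of the
slice but does not require `A` to lie in it, and it is `0` if the slice is empty. -/
noncomputable def sliceDensity (S : Finset ι) (r : ℕ) (A : Finset (Finset ι)) : ℝ :=
  #A / (#S).choose r

variable {S : Finset ι} {r s : ℕ} {A B : Finset (Finset ι)}

lemma sliceDensity_nonneg : 0 ≤ sliceDensity S r A := by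
  unfold sliceDensity; positivity

lemma sliceDensity_mono (h : A ⊆ B) : sliceDensity S r A ≤ sliceDensity S r B := by
  unfold sliceDensity; gcongr

lemma sliceDensity_le_one (hA : A ⊆ S.powersetCard r) : sliceDensity S r A ≤ 1 :=
  div_le_one_of_le₀ (mod_cast card_powersetCard r S ▸ card_le_card hA) (by positivity)

lemma sliceDensity_mem_Icc (hA : A ⊆ S.powersetCard r) : sliceDensity S r A ∈ Set.Icc 0 1 :=
  ⟨sliceDensity_nonneg, sliceDensity_le_one hA⟩

lemma sliceDensity_mul_one_sub_nonneg (hA : A ⊆ S.powersetCard r) :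
    0 ≤ sliceDensity S r A * (1 - sliceDensity S r A) :=
  mul_nonneg sliceDensity_nonneg (sub_nonneg.2 (sliceDensity_le_one hA))

lemma sliceDensity_mul_one_sub_eq_zero (hr : (#S).choose r = 1) (hA : A ⊆ S.powersetCard r) :
    sliceDensity S r A * (1 - sliceDensity S r A) = 0 := by
  have hcard : #A ≤ 1 := by simpa only [card_powersetCard, hr] using card_le_card hA
  unfold sliceDensity
  rw [hr]
  interval_cases #A <;> simp

lemma sliceDensity_eq_of_card_eq {α : ℝ} (hr : r ≤ #S) (hα : #A = α * (#S).choose r) :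
    sliceDensity S r A = α := by
  have hchoose : ((#S).choose r : ℝ) ≠ 0 := mod_cast (Nat.choose_pos hr).ne'
  rw [sliceDensity, hα, mul_div_cancel_right₀ _ hchoose]

variable [DecidableEq ι] {e : ι}

lemma sliceDensity_union_le :
    sliceDensity S r (A ∪ B) ≤ sliceDensity S r A + sliceDensity S r B := by
  unfold sliceDensity
  rw [← add_div]
  gcongr
  exact_mod_cast card_union_le A B

lemma sliceDensity_sdiff (hr : r ≤ #S) (hA : A ⊆ S.powersetCard r) :
    sliceDensity S r (S.powersetCard r \ A) = 1 - sliceDensity S r A := by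
  have hchoose : ((#S).choose r : ℝ) ≠ 0 := mod_cast (Nat.choose_pos hr).ne'
  unfold sliceDensity
  rw [cast_card_sdiff hA, card_powersetCard, sub_div, div_self hchoose]

lemma shadow_map {κ : Type*} [DecidableEq κ] (f : ι ↪ κ) (A : Finset (Finset ι)) :
    ∂ (A.map (mapEmbedding f).toEmbedding) = (∂ A).map (mapEmbedding f).toEmbedding := by
  ext t
  simp only [mem_shadow_iff, mem_map, RelEmbedding.coe_toEmbedding, mapEmbedding_apply]
  constructor
  · rintro ⟨_, ⟨x, hx, rfl⟩, _, ha, rfl⟩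
    obtain ⟨a, ha', rfl⟩ := mem_map.1 ha
    exact ⟨x.erase a, ⟨x, hx, a, ha', rfl⟩, map_erase f x a⟩
  · rintro ⟨_, ⟨x, hx, a, ha, rfl⟩, rfl⟩
    exact ⟨x.map f, ⟨x, hx, rfl⟩, f a, mem_map_of_mem f ha, (map_erase f x a).symm⟩

lemma sliceDensity_le_sliceDensity_shadow (hA : A ⊆ S.powersetCard (s + 1)) :
    sliceDensity S (s + 1) A ≤ sliceDensity S s (∂ A) := by
  let f : S ↪ ι := Embedding.subtype (· ∈ S)
  have hS : (univ : Finset S).map f = S := attach_map_val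
  rw [← hS, powersetCard_map, subset_map_iff] at hA
  obtain ⟨B, hB, rfl⟩ := hA
  have hsized : (B : Set (Finset S)).Sized (s + 1) := fun x hx => (mem_powersetCard.1 (hB hx)).2
  have hLYM := local_lubell_yamamoto_meshalkin_inequality_div (𝕜 := ℝ) s.add_one_ne_zero hsized
  simpa only [sliceDensity, shadow_map, card_map, Fintype.card_coe, card_univ,
    Nat.add_sub_cancel] using hLYM

lemma sliceDensity_le_of_insert_mem (hs : s + 1 ≤ #S) (hA : A ⊆ S.powersetCard s)
    (hB : B ⊆ S.powersetCard (s + 1)) (h : ∀ x ∈ A, ∀ a ∈ S \ x, insert a x ∈ B) :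
    sliceDensity S s A ≤ sliceDensity S (s + 1) B := by
  have hshadow : ∂ (S.powersetCard (s + 1) \ B) ⊆ S.powersetCard s \ A := by
    intro x hx
    obtain ⟨a, hax, hmem⟩ := mem_shadow_iff_insert_mem.1 hx
    obtain ⟨hslice, hnotB⟩ := mem_sdiff.1 hmem
    obtain ⟨hsub, hcard⟩ := mem_powersetCard.1 hslice
    obtain ⟨haS, hxS⟩ := insert_subset_iff.1 hsub
    rw [card_insert_of_notMem hax, Nat.add_right_cancel_iff] at hcard
    exact mem_sdiff.2 ⟨mem_powersetCard.2 ⟨hxS, hcard⟩,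
      fun hxA => hnotB (h x hxA a (mem_sdiff.2 ⟨haS, hax⟩))⟩
  have hLYM := (sliceDensity_le_sliceDensity_shadow sdiff_subset).trans
    (sliceDensity_mono (S := S) hshadow)
  rw [sliceDensity_sdiff hs hB, sliceDensity_sdiff (by omega) hA] at hLYM
  linarith

lemma sliceDensity_memberSubfamily_add_nonMemberSubfamily (e : ι) :
    sliceDensity S r (A.memberSubfamily e) + sliceDensity S r (A.nonMemberSubfamily e) =
      sliceDensity S r A := by
  unfold sliceDensity
  rw [← add_div, ← Nat.cast_add, card_memberSubfamily_add_card_nonMemberSubfamily]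

lemma sum_sliceDensity_nonMemberSubfamily (hA : A ⊆ S.powersetCard r) :
    ∑ e ∈ S, sliceDensity S r (A.nonMemberSubfamily e) = (#S - r) * sliceDensity S r A := by
  have hcount : ∑ e ∈ S, #(A.nonMemberSubfamily e) = ∑ x ∈ A, #(S \ x) := by
    simp only [nonMemberSubfamily, ← filter_notMem_eq_sdiff]
    exact sum_card_bipartiteAbove_eq_sum_card_bipartiteBelow (fun e x => e ∉ x)
  have hcard : ∀ x ∈ A, (#(S \ x) : ℝ) = #S - r := fun x hx => by
    obtain ⟨hxS, hxr⟩ := mem_powersetCard.1 (hA hx)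
    rw [cast_card_sdiff hxS, hxr]
  unfold sliceDensity
  rw [← sum_div, ← Nat.cast_sum, hcount, Nat.cast_sum, sum_congr rfl hcard, sum_const,
    nsmul_eq_mul, mul_comm, mul_div_assoc]

lemma sum_sliceDensity_memberSubfamily (hA : A ⊆ S.powersetCard r) :
    ∑ e ∈ S, sliceDensity S r (A.memberSubfamily e) = r * sliceDensity S r A := by
  simp only [eq_sub_of_add_eq (sliceDensity_memberSubfamily_add_nonMemberSubfamily _),
    sum_sub_distrib, sum_const, nsmul_eq_mul, sum_sliceDensity_nonMemberSubfamily hA]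
  ring

lemma mul_sliceDensity_erase_pred (he : e ∈ S) :
    (s + 1) / #S * sliceDensity (S.erase e) s A = sliceDensity S (s + 1) A := by
  obtain ⟨m, hm⟩ : ∃ m, #S = m + 1 := ⟨_, (card_erase_add_one he).symm⟩
  have hchoose : ((m : ℝ) + 1) * m.choose s = (m + 1).choose (s + 1) * (s + 1) :=
    mod_cast Nat.add_one_mul_choose_eq m s
  unfold sliceDensity
  rw [card_erase_of_mem he, hm, Nat.add_sub_cancel, div_mul_div_comm, Nat.cast_add_one, hchoose,
    mul_comm (_ + _), mul_div_mul_right _ _ s.cast_add_one_ne_zero]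

lemma mul_sliceDensity_erase (he : e ∈ S) (hr : r < #S) :
    (#S - r) / #S * sliceDensity (S.erase e) r A = sliceDensity S r A := by
  obtain ⟨m, hm⟩ : ∃ m, #S = m + 1 := ⟨_, (card_erase_add_one he).symm⟩
  have hne : (#S : ℝ) - r ≠ 0 := sub_ne_zero.2 (mod_cast hr.ne')
  have hchoose : (#S : ℝ) * m.choose r = (#S).choose r * (#S - r) := by
    rw [hm, ← Nat.cast_sub (hm ▸ hr.le), mul_comm]
    exact_mod_cast Nat.choose_mul_succ_eq m r
  unfold sliceDensity
  rw [card_erase_of_mem he, hm, Nat.add_sub_cancel, ← hm, div_mul_div_comm, hchoose,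
    mul_comm (_ - _), mul_div_mul_right _ _ hne]

lemma memberSubfamily_subset_powersetCard (hA : A ⊆ S.powersetCard (s + 1)) :
    A.memberSubfamily e ⊆ (S.erase e).powersetCard s := by
  intro x hx
  obtain ⟨hmem, hex⟩ := mem_memberSubfamily.1 hx
  obtain ⟨hsub, hcard⟩ := mem_powersetCard.1 (hA hmem)
  rw [card_insert_of_notMem hex, Nat.add_right_cancel_iff] at hcard
  exact mem_powersetCard.2 ⟨subset_erase.2 ⟨(insert_subset_iff.1 hsub).2, hex⟩, hcard⟩

lemma nonMemberSubfamily_subset_powersetCard (hA : A ⊆ S.powersetCard r) :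
    A.nonMemberSubfamily e ⊆ (S.erase e).powersetCard r := by
  intro x hx
  obtain ⟨hmem, hex⟩ := mem_nonMemberSubfamily.1 hx
  obtain ⟨hsub, hcard⟩ := mem_powersetCard.1 (hA hmem)
  exact mem_powersetCard.2 ⟨subset_erase.2 ⟨hsub, hex⟩, hcard⟩

/-! ### Vertex boundaries of links and deletions -/

/-- The vertex boundary of `A` in the graph on the `r`-subsets of `S` in which two sets are adjacent
when they differ by exchanging one element. -/
def vertexBoundary (S : Finset ι) (r : ℕ) (A : Finset (Finset ι)) : Finset (Finset ι) :=
  {x ∈ S.powersetCard r | x ∉ A ∧ ∃ y ∈ A, #(symmDiff x y) = 2}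

lemma vertexBoundary_subset : vertexBoundary S r A ⊆ S.powersetCard r := filter_subset _ _

lemma mem_vertexBoundary {x : Finset ι} : x ∈ vertexBoundary S r A ↔
    (x ⊆ S ∧ #x = r) ∧ x ∉ A ∧ ∃ y ∈ A, #(symmDiff x y) = 2 := by
  rw [vertexBoundary, mem_filter, mem_powersetCard]

lemma symmDiff_insert_insert_of_notMem {x y : Finset ι} (hx : e ∉ x) (hy : e ∉ y) :
    symmDiff (insert e x) (insert e y) = symmDiff x y := by
  grind [mem_symmDiff]

lemma symmDiff_insert_insert_same {x : Finset ι} {a b : ι} (hab : a ≠ b) (ha : a ∉ x)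
    (hb : b ∉ x) : symmDiff (insert a x) (insert b x) = {a, b} := by
  grind [mem_symmDiff]

lemma insert_mem_union_vertexBoundary {x : Finset ι} {a b : ι} (ha : a ∉ x) (hb : b ∉ x)
    (hax : insert a x ∈ A) (hbx : insert b x ∈ S.powersetCard r) :
    insert b x ∈ A ∪ vertexBoundary S r A := by
  by_cases hbA : insert b x ∈ A
  · exact mem_union_left _ hbA
  have hba : b ≠ a := by rintro rfl; exact hbA hax
  refine mem_union_right _ (mem_filter.2 ⟨hbx, hbA, insert a x, hax, ?_⟩)
  rw [symmDiff_insert_insert_same hba hb ha, card_pair hba]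

lemma vertexBoundary_memberSubfamily_subset (he : e ∈ S) :
    vertexBoundary (S.erase e) s (A.memberSubfamily e) ⊆
      (vertexBoundary S (s + 1) A).memberSubfamily e := by
  intro x hx
  obtain ⟨⟨hxS, hxs⟩, hxA, y, hyA, hxy⟩ := mem_vertexBoundary.1 hx
  obtain ⟨hyA, hey⟩ := mem_memberSubfamily.1 hyA
  obtain ⟨hxS, hex⟩ := subset_erase.1 hxS
  refine mem_memberSubfamily.2
    ⟨mem_vertexBoundary.2 ⟨⟨insert_subset he hxS, ?_⟩, ?_, _, hyA, ?_⟩, hex⟩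
  · rw [card_insert_of_notMem hex, hxs]
  · exact fun h => hxA (mem_memberSubfamily.2 ⟨h, hex⟩)
  · rw [symmDiff_insert_insert_of_notMem hex hey, hxy]

lemma vertexBoundary_nonMemberSubfamily_subset (e : ι) :
    vertexBoundary (S.erase e) r (A.nonMemberSubfamily e) ⊆
      (vertexBoundary S r A).nonMemberSubfamily e := by
  intro x hx
  obtain ⟨⟨hxS, hxr⟩, hxA, y, hyA, hxy⟩ := mem_vertexBoundary.1 hx
  obtain ⟨hyA, -⟩ := mem_nonMemberSubfamily.1 hyA
  obtain ⟨hxS, hex⟩ := subset_erase.1 hxS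
  exact mem_nonMemberSubfamily.2 ⟨mem_vertexBoundary.2 ⟨⟨hxS, hxr⟩,
    fun h => hxA (mem_nonMemberSubfamily.2 ⟨h, hex⟩), y, hyA, hxy⟩, hex⟩

lemma shadow_nonMemberSubfamily_subset (he : e ∈ S) (hA : A ⊆ S.powersetCard (s + 1)) :
    ∂ (A.nonMemberSubfamily e) ⊆ (A ∪ vertexBoundary S (s + 1) A).memberSubfamily e := by
  intro x hx
  obtain ⟨a, hax, hmem⟩ := mem_shadow_iff_insert_mem.1 hx
  obtain ⟨haA, heax⟩ := mem_nonMemberSubfamily.1 hmem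
  obtain ⟨hsub, hcard⟩ := mem_powersetCard.1 (hA haA)
  have hex : e ∉ x := fun h => heax (mem_insert_of_mem h)
  have hslice : insert e x ∈ S.powersetCard (s + 1) :=
    mem_powersetCard.2 ⟨insert_subset he ((subset_insert a x).trans hsub),
      by rwa [card_insert_of_notMem hex, ← card_insert_of_notMem hax]⟩
  exact mem_memberSubfamily.2 ⟨insert_mem_union_vertexBoundary hax hex haA hslice, hex⟩

lemma insert_mem_nonMemberSubfamily_union_vertexBoundary {x : Finset ι} {a : ι}
    (hA : A ⊆ S.powersetCard r) (hx : x ∈ A.memberSubfamily e) (ha : a ∈ S.erase e \ x) :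
    insert a x ∈ (A ∪ vertexBoundary S r A).nonMemberSubfamily e := by
  obtain ⟨heA, hex⟩ := mem_memberSubfamily.1 hx
  obtain ⟨haS, hax⟩ := mem_sdiff.1 ha
  obtain ⟨hae, haS⟩ := mem_erase.1 haS
  obtain ⟨hsub, hcard⟩ := mem_powersetCard.1 (hA heA)
  have hslice : insert a x ∈ S.powersetCard r :=
    mem_powersetCard.2 ⟨insert_subset haS ((subset_insert e x).trans hsub),
      by rwa [card_insert_of_notMem hax, ← card_insert_of_notMem hex]⟩
  refine mem_nonMemberSubfamily.2 ⟨insert_mem_union_vertexBoundary hex hax heA hslice, ?_⟩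
  simp only [mem_insert, hae.symm, hex, or_self, not_false_eq_true]

lemma sliceDensity_nonMemberSubfamily_le (he : e ∈ S) (hA : A ⊆ S.powersetCard (s + 1)) :
    sliceDensity (S.erase e) (s + 1) (A.nonMemberSubfamily e) ≤
      sliceDensity (S.erase e) s (A.memberSubfamily e) +
        sliceDensity (S.erase e) s ((vertexBoundary S (s + 1) A).memberSubfamily e) :=
  calc
    _ ≤ sliceDensity (S.erase e) s (∂ (A.nonMemberSubfamily e)) :=
      sliceDensity_le_sliceDensity_shadow (nonMemberSubfamily_subset_powersetCard hA)
    _ ≤ sliceDensity (S.erase e) s ((A ∪ vertexBoundary S (s + 1) A).memberSubfamily e) :=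
      sliceDensity_mono (shadow_nonMemberSubfamily_subset he hA)
    _ ≤ _ := by rw [memberSubfamily_union]; exact sliceDensity_union_le

lemma sliceDensity_memberSubfamily_le (he : e ∈ S) (hs : s + 1 < #S)
    (hA : A ⊆ S.powersetCard (s + 1)) :
    sliceDensity (S.erase e) s (A.memberSubfamily e) ≤
      sliceDensity (S.erase e) (s + 1) (A.nonMemberSubfamily e) +
        sliceDensity (S.erase e) (s + 1) ((vertexBoundary S (s + 1) A).nonMemberSubfamily e) :=
  calc
    _ ≤ sliceDensity (S.erase e) (s + 1)
          ((A ∪ vertexBoundary S (s + 1) A).nonMemberSubfamily e) :=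
      sliceDensity_le_of_insert_mem (by rw [card_erase_of_mem he]; omega)
        (memberSubfamily_subset_powersetCard hA)
        (nonMemberSubfamily_subset_powersetCard (union_subset hA vertexBoundary_subset))
        fun _ hx _ ha => insert_mem_nonMemberSubfamily_union_vertexBoundary hA hx ha
    _ ≤ _ := by rw [nonMemberSubfamily_union]; exact sliceDensity_union_le

lemma sliceDensity_mul_one_sub_le_of_erase {m : ℕ} (he : e ∈ S) (hS : #S = m + 1)
    (hs : s + 1 ≤ m) (hA : A ⊆ S.powersetCard (s + 1))
    (h₁ : sliceDensity (S.erase e) s (A.memberSubfamily e) *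
        (1 - sliceDensity (S.erase e) s (A.memberSubfamily e)) ≤
      √(isoWeight m s) *
        sliceDensity (S.erase e) s (vertexBoundary (S.erase e) s (A.memberSubfamily e)))
    (h₀ : sliceDensity (S.erase e) (s + 1) (A.nonMemberSubfamily e) *
        (1 - sliceDensity (S.erase e) (s + 1) (A.nonMemberSubfamily e)) ≤
      √(isoWeight m (s + 1)) * sliceDensity (S.erase e) (s + 1)
        (vertexBoundary (S.erase e) (s + 1) (A.nonMemberSubfamily e))) :
    sliceDensity S (s + 1) A * (1 - sliceDensity S (s + 1) A) ≤
      √(isoWeight m s + (m - s) / (m + 1)) *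
          sliceDensity S (s + 1) ((vertexBoundary S (s + 1) A).memberSubfamily e) +
        √(isoWeight m (s + 1) + (s + 1) / (m + 1)) *
          sliceDensity S (s + 1) ((vertexBoundary S (s + 1) A).nonMemberSubfamily e) := by
  have hsm : (s : ℝ) + 1 ≤ m := mod_cast hs
  have hs0 : (0 : ℝ) ≤ s := s.cast_nonneg
  have hms : (0 : ℝ) ≤ m - s := by linarith
  have hW₁ : 0 ≤ isoWeight m s := isoWeight_nonneg hs0 (by linarith)
  have hW₀ : 0 ≤ isoWeight m (s + 1) := isoWeight_nonneg (by linarith) hsm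
  have hlink (X : Finset (Finset ι)) : (s + 1 : ℝ) / (m + 1) * sliceDensity (S.erase e) s X =
      sliceDensity S (s + 1) X := by
    rw [← mul_sliceDensity_erase_pred he, hS, Nat.cast_add_one]
  have hdel (X : Finset (Finset ι)) :
      (m - s : ℝ) / (m + 1) * sliceDensity (S.erase e) (s + 1) X = sliceDensity S (s + 1) X := by
    rw [← mul_sliceDensity_erase he (by omega), hS]
    push_cast
    ring
  have htwo := convex_comb_mul_one_sub_le
    (sliceDensity_mem_Icc (memberSubfamily_subset_powersetCard (e := e) hA))
    (sliceDensity_mem_Icc (nonMemberSubfamily_subset_powersetCard (e := e) hA))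
    (p := (s + 1 : ℝ) / (m + 1)) (q := (m - s : ℝ) / (m + 1)) (by positivity) (by positivity)
    (by field_simp; ring) hW₁ hW₀ sliceDensity_nonneg sliceDensity_nonneg
    (h₁.trans (by gcongr; exact sliceDensity_mono (vertexBoundary_memberSubfamily_subset he)))
    (h₀.trans (by gcongr; exact sliceDensity_mono (vertexBoundary_nonMemberSubfamily_subset e)))
    (sliceDensity_nonMemberSubfamily_le he hA)
    (sliceDensity_memberSubfamily_le he (by omega) hA)
  simpa only [hlink, hdel, sliceDensity_memberSubfamily_add_nonMemberSubfamily,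
    mul_left_comm (_ / _ : ℝ) (√_)] using htwo

theorem sliceDensity_mul_one_sub_le (hr : r ≤ #S) (hA : A ⊆ S.powersetCard r) :
    sliceDensity S r A * (1 - sliceDensity S r A) ≤
      √(isoWeight #S r) * sliceDensity S r (vertexBoundary S r A) := by
  induction S using Finset.strongInduction generalizing r A with | H S ih
  by_cases hextreme : r = 0 ∨ r = #S
  · have hchoose : (#S).choose r = 1 := by
      rcases hextreme with rfl | rfl
      exacts [Nat.choose_zero_right _, Nat.choose_self _]
    rw [sliceDensity_mul_one_sub_eq_zero hchoose hA]
    exact mul_nonneg (Real.sqrt_nonneg _) sliceDensity_nonneg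
  obtain ⟨s, rfl⟩ : ∃ s, r = s + 1 := Nat.exists_eq_add_one.2 (by omega)
  obtain ⟨m, hS⟩ : ∃ m, #S = m + 1 := Nat.exists_eq_add_one.2 (by omega)
  have hs : s + 1 ≤ m := by omega
  set b := vertexBoundary S (s + 1) A
  set w₁ := √(isoWeight m s + (m - s) / (m + 1))
  set w₀ := √(isoWeight m (s + 1) + (s + 1) / (m + 1))
  have hstep : ∀ e ∈ S, sliceDensity S (s + 1) A * (1 - sliceDensity S (s + 1) A) ≤
      w₁ * sliceDensity S (s + 1) (b.memberSubfamily e) +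
        w₀ * sliceDensity S (s + 1) (b.nonMemberSubfamily e) := fun e he => by
    have hcard : #(S.erase e) = m := by rw [card_erase_of_mem he, hS, Nat.add_sub_cancel]
    have ih₁ := ih _ (erase_ssubset he) (by omega) (memberSubfamily_subset_powersetCard hA)
    have ih₀ := ih _ (erase_ssubset he) (by omega) (nonMemberSubfamily_subset_powersetCard hA)
    rw [hcard] at ih₁ ih₀
    rw [Nat.cast_add_one] at ih₀
    exact sliceDensity_mul_one_sub_le_of_erase he hS hs hA ih₁ ih₀
  have haverage := sum_le_sum hstep
  rw [sum_const, nsmul_eq_mul, sum_add_distrib, ← mul_sum, ← mul_sum,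
    sum_sliceDensity_memberSubfamily vertexBoundary_subset,
    sum_sliceDensity_nonMemberSubfamily vertexBoundary_subset, hS] at haverage
  have hweight := sqrt_isoWeight_average_le (m := m) (s := s) s.cast_nonneg (mod_cast hs)
  calc sliceDensity S (s + 1) A * (1 - sliceDensity S (s + 1) A)
    _ ≤ ((s + 1) / (m + 1) * w₁ + (m - s) / (m + 1) * w₀) * sliceDensity S (s + 1) b := by
      push_cast at haverage
      field_simp
      linarith
    _ ≤ √(isoWeight #S (s + 1 : ℕ)) * sliceDensity S (s + 1) b := by
      rw [hS, Nat.cast_add_one, Nat.cast_add_one]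
      gcongr
      exact sliceDensity_nonneg

end SliceDensity

theorem stmt_0_general {ι : Type*} [DecidableEq ι] {n r : ℕ} (hr : 0 < r) (hrn : r < n)
    {S : Finset ι} (hS : #S = n) {A : Finset (Finset ι)} (hA : A ⊆ S.powersetCard r)
    {α : ℝ} (hα : (#A : ℝ) = α * n.choose r) :
    1 / √2 * √(n / (r * (n - r))) * (α * (1 - α)) * n.choose r ≤ #(vertexBoundary S r A) := by
  subst hS
  have hchoose : (0 : ℝ) < (#S).choose r := mod_cast Nat.choose_pos hrn.le
  have hrpos : (0 : ℝ) < r := mod_cast hr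
  have hsub : (0 : ℝ) < #S - r := sub_pos.2 (mod_cast hrn)
  have hcancel : 1 / √2 * √(#S / (r * (#S - r))) * √(isoWeight #S r) = 1 := by
    have hSpos : (0 : ℝ) < #S := by linarith
    rw [one_div, ← Real.sqrt_inv, ← Real.sqrt_mul (by positivity), ← Real.sqrt_mul (by positivity),
      Real.sqrt_eq_one, isoWeight]
    field_simp
  have hmain := sliceDensity_mul_one_sub_le hrn.le hA
  rw [sliceDensity_eq_of_card_eq hrn.le hα] at hmain
  calc 1 / √2 * √(#S / (r * (#S - r))) * (α * (1 - α)) * (#S).choose r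
    _ ≤ 1 / √2 * √(#S / (r * (#S - r))) *
          (√(isoWeight #S r) * sliceDensity S r (vertexBoundary S r A)) * (#S).choose r := by gcongr
    _ = #(vertexBoundary S r A) := by
      rw [← mul_assoc, hcancel, one_mul, sliceDensity, div_mul_cancel₀ _ hchoose.ne']

/-- **An approximate isoperimetric inequality for `r`-sets.**
If `A ⊆ [n]^(r)` with `|A| = α·C(n,r)`, then its vertex-boundary in the graph `Γ_n^(r)`
(where `x ~ y` iff `|x Δ y| = 2`) satisfies
`|b(A)| ≥ (1/5)·√(n/(r(n-r)))·α(1-α)·C(n,r)`. -/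
theorem stmt_0 (n r : ℕ) (hn : 2 ≤ n) (hr1 : 1 ≤ r) (hrn : r ≤ n - 1)
    (A : Finset (Finset ℕ))
    (hA : A ⊆ (Finset.Icc 1 n).powersetCard r)
    (α : ℝ) (hα : (A.card : ℝ) = α * (n.choose r : ℝ)) :
    (((((Finset.Icc 1 n).powersetCard r).filter
        (fun x => x ∉ A ∧ ∃ y ∈ A, (symmDiff x y).card = 2)).card : ℝ))
      ≥ (1/5) * Real.sqrt ((n : ℝ) / ((r : ℝ) * ((n : ℝ) - (r : ℝ))))
          * (α * (1 - α)) * (n.choose r : ℝ) := by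
  have hcard : #(Icc 1 n) = n := by simp
  have hdensity : sliceDensity (Icc 1 n) r A = α :=
    sliceDensity_eq_of_card_eq (by omega) (by rwa [hcard])
  have hvariance : 0 ≤ α * (1 - α) := hdensity ▸ sliceDensity_mul_one_sub_nonneg hA
  have hconst : 1 / 5 ≤ 1 / √2 :=
    one_div_le_one_div_of_le (by positivity) (Real.sqrt_le_iff.2 (by norm_num))
  exact (stmt_0_general hr1 (by omega) hcard hA hα).trans' (by gcongr)
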